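/- K is isomorphic to H^{⊕n} as an R-module. (Affine version of the lemma: a vector bundle K is isomorphic to the n-th power of a simple vector bundle H as soon as Hom(K,H) and Hom(H,K) are n-dimensional and the composition pairing between them is nondegenerate.) -/

import Mathlib

/-!
Nondegeneracy of the pairing and the equality of dimensions identify `Hom_R(K, H)` with the
`k`-dual of `Hom_R(H, K)`, so a basis `f j` of `Hom_R(H, K)` has a dual family `e i` with
`e i ∘ f j = δ_ij`.  The map `(e i) : K → H^n` is therefore surjective, with section `∑ f j`.
Localized at a maximal ideal, it becomes a surjection between finite free modules of equal rank,
which is injective because surjective endomorphisms of finite modules are injective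
(`surjective_linearMap_injective_of_rank_eq`).  Injectivity being local, `(e i)` is an isomorphism.
-/

/-- The source is isomorphic to the target, so the surjection can be viewed as an endomorphism of
a finite module, to which the Orzech property applies. -/
lemma surjective_linearMap_injective_of_rank_eq.{u, w} {A : Type u} {M N : Type w} [CommRing A]
    [Nontrivial A] [AddCommGroup M] [Module A M] [AddCommGroup N] [Module A N]
    [Module.Finite A M] [Module.Free A M] [Module.Free A N]
    (h : Module.rank A M = Module.rank A N) (g : M →ₗ[A] N) (hg : Function.Surjective g) :
    Function.Injective g := by
  obtain ⟨φ⟩ := nonempty_linearEquiv_of_rank_eq h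
  have hinj := OrzechProperty.injective_of_surjective_endomorphism (φ.symm.toLinearMap ∘ₗ g)
    (φ.symm.surjective.comp hg)
  intro x y hxy
  exact hinj (by simp [hxy])

/-- A surjection `K → H^n` of finite projective modules is injective when `K` has `n` times the
rank of `H` at every prime. -/
lemma injective_of_surjective_of_localized_rank.{w} {R H K : Type w} [CommRing R]
    [AddCommGroup H] [Module R H] [AddCommGroup K] [Module R K]
    [Module.Finite R H] [Module.Projective R H] [Module.Finite R K] [Module.Projective R K]
    (n : ℕ)
    (hrank : ∀ (p : Ideal R) [p.IsPrime],
      Module.rank (Localization.AtPrime p) (LocalizedModule p.primeCompl K)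
        = (n : Cardinal) * Module.rank (Localization.AtPrime p) (LocalizedModule p.primeCompl H))
    (F : K →ₗ[R] (Fin n → H)) (hF : Function.Surjective F) : Function.Injective F := by
  have free : ∀ (M : Type w) [AddCommGroup M] [Module R M] [Module.Finite R M]
      [Module.Projective R M] (p : Ideal R) [p.IsPrime],
      Module.Free (Localization.AtPrime p) (LocalizedModule p.primeCompl M) := by
    intro M _ _ _ _ p _
    have := Module.projective_of_isLocalizedModule (Rₛ := Localization.AtPrime p) p.primeCompl
      (LocalizedModule.mkLinearMap p.primeCompl M)
    exact Module.free_of_flat_of_isLocalRing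
  refine injective_of_isLocalized_maximal (fun p _ => LocalizedModule p.primeCompl K)
    (fun p _ => LocalizedModule.mkLinearMap p.primeCompl K)
    (fun p _ => Fin n → LocalizedModule p.primeCompl H)
    (fun p _ => .pi fun i => LocalizedModule.mkLinearMap p.primeCompl H ∘ₗ .proj i) F ?_
  intro p hp
  have := free H p
  have := free K p
  have hs := IsLocalizedModule.map_surjective p.primeCompl
    (LocalizedModule.mkLinearMap p.primeCompl K)
    (.pi fun i : Fin n => LocalizedModule.mkLinearMap p.primeCompl H ∘ₗ .proj i) F hF
  exact surjective_linearMap_injective_of_rank_eq (A := Localization.AtPrime p)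
    (by rw [hrank p, rank_pi]; simp)
    (IsLocalizedModule.mapExtendScalars p.primeCompl
      (LocalizedModule.mkLinearMap p.primeCompl K)
      (.pi fun i : Fin n => LocalizedModule.mkLinearMap p.primeCompl H ∘ₗ .proj i)
      (Localization.AtPrime p) F) hs

/-- affine version of the lemma: let `H`, `K` be finitely generated projective
modules over a commutative `k`-algebra `R`, with `H` simple (`k ≃ End_R(H)`), the rank of `K`
equal to `n` times the rank of `H` at every prime, `Hom_R(K,H)` and `Hom_R(H,K)` both
`n`-dimensional over `k`, and the composition pairing
`Hom_R(K,H) × Hom_R(H,K) → End_R(H) ≅ k` nondegenerate.  Then `K ≅ H^{⊕n}`. -/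
theorem simple_bundle_power_of_nondegenerate_pairing.{v}
    (k : Type*) (R H K : Type v) [Field k] [CommRing R] [Algebra k R]
    [AddCommGroup H] [Module R H] [Module k H] [IsScalarTower k R H]
    [AddCommGroup K] [Module R K] [Module k K] [IsScalarTower k R K]
    [Module.Finite R H] [Module.Projective R H]
    [Module.Finite R K] [Module.Projective R K]
    (n : ℕ) (hn : 0 < n)
    (hsimple : Function.Bijective
      (fun c : k => algebraMap k R c • (LinearMap.id : H →ₗ[R] H)))
    (hrank : ∀ (p : Ideal R) [p.IsPrime],
      Module.rank (Localization.AtPrime p) (LocalizedModule p.primeCompl K)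
        = (n : Cardinal) * Module.rank (Localization.AtPrime p) (LocalizedModule p.primeCompl H))
    (hdimKH : Module.finrank k (K →ₗ[R] H) = n)
    (hdimHK : Module.finrank k (H →ₗ[R] K) = n)
    (hnd₁ : ∀ e : K →ₗ[R] H, e ≠ 0 → ∃ f : H →ₗ[R] K, e ∘ₗ f ≠ 0)
    (hnd₂ : ∀ f : H →ₗ[R] K, f ≠ 0 → ∃ e : K →ₗ[R] H, e ∘ₗ f ≠ 0) :
    Nonempty (K ≃ₗ[R] (Fin n → H)) := by
  have hfin : FiniteDimensional k (H →ₗ[R] K) := .of_finrank_pos (by omega)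
  have hfin' : FiniteDimensional k (K →ₗ[R] H) := .of_finrank_pos (by omega)
  let θ : k ≃ₗ[k] (H →ₗ[R] H) := LinearEquiv.ofBijective
    (LinearMap.toSpanSingleton k (H →ₗ[R] H) LinearMap.id) (by
      convert hsimple using 1
      ext c x
      simp)
  have hθ (c : k) (x : H) : θ c x = c • x := by simp [θ]
  let φ : (K →ₗ[R] H) →ₗ[k] Module.Dual k (H →ₗ[R] K) :=
    LinearMap.mk₂ k (fun e f => θ.symm (e ∘ₗ f))
      (fun e e' f => by rw [LinearMap.add_comp, map_add])
      (fun c e f => by rw [LinearMap.smul_comp, map_smul])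
      (fun e f f' => by rw [LinearMap.comp_add, map_add])
      (fun c e f => by
        rw [← map_smul]
        congr 1
        ext x
        -- `e` is only `R`-linear, so the `k`-scalar has to be moved through `R`
        simp only [LinearMap.comp_apply, LinearMap.smul_apply]
        rw [← algebraMap_smul R c (f x), map_smul, algebraMap_smul])
  have hφ (e : K →ₗ[R] H) (f : H →ₗ[R] K) : θ (φ e f) = e ∘ₗ f := by simp [φ]
  have hφinj : Function.Injective φ := by
    rw [injective_iff_map_eq_zero]
    intro e he
    by_contra hne
    obtain ⟨f, hf⟩ := hnd₁ e hne
    exact hf (by rw [← hφ, he]; simp)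
  let Φ := LinearEquiv.ofInjectiveOfFinrankEq φ hφinj
    (by rw [Subspace.dual_finrank_eq, hdimKH, hdimHK])
  let b := Module.finBasisOfFinrankEq k (H →ₗ[R] K) hdimHK
  let e (i : Fin n) : K →ₗ[R] H := Φ.symm (b.coord i)
  have he (i j : Fin n) (x : H) : e i (b j x) = if i = j then x else 0 := by
    have h1 : φ (e i) = b.coord i := Φ.apply_symm_apply (b.coord i)
    have h2 := congrArg (fun g => g x) (hφ (e i) (b j))
    simp only [h1, hθ, LinearMap.comp_apply] at h2
    rw [← h2]
    simp [Finsupp.single_apply, eq_comm]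
  have hsurj : Function.Surjective (LinearMap.pi e) := by
    intro y
    refine ⟨∑ j, b j (y j), ?_⟩
    ext i
    simp [he]
  exact ⟨LinearEquiv.ofBijective (LinearMap.pi e)
    ⟨injective_of_surjective_of_localized_rank n hrank _ hsurj, hsurj⟩⟩
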